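/- Let p ≥ 5 be a prime with p ≡ 3 (mod 4). Then for every integer r ≥ 1: A((p^r − 1)/2) ≡ 0 (mod p²). -/

import Mathlib

/-!
Write `p = 2m + 1` with `m` odd, `t j = C(m,j)² C(m+j,j)`, and let `h j` be the `j`-th harmonic
number, which makes sense modulo `p²` for `j < p`. The congruence is proved by induction on `r`,
using `(p^(r+1) - 1)/2 = p * ((p^r - 1)/2) + m`. All computations take place in `ZMod (p ^ 2)`,
where `p` squares to zero, so that `p * x` depends only on the reduction of `x` modulo `p`.

*Induction step* (`apA_step`). Split the summation index of `A(pn+m)` as `pk + j` with `j < p`. For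
`j > m` the factor `C(pn+m, pk+j)²` vanishes modulo `p²` by Lucas. For `j ≤ m` the Lucas congruence
modulo `p²` (`choose_block`) writes the term as `C(n,k)² C(n+k,k) t j (1 + p n D j + p k B j)` where
`B j = 2 h(m-j) + h(m+j) - 3 h j`. Since `∑ t j B j` vanishes modulo `p` (`sum_derivative_term`),
`A(pn+m)` is a multiple of `A(n)` modulo `p²`.

*Base case* (`apA_half`). The complement formula (`choose_complement`) gives, modulo `p²` and up to a
constant, `t j = (-1)^(m-j) C(m,j)³ (1 + p h(m-j))`. The sum of `(-1)^(m-j) C(m,j)³` is zero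
because `m` is odd, and the sum of `(-1)^(m-j) C(m,j)³ h(m-j)` vanishes modulo `p`.

Both vanishing statements modulo `p` come from
`∑ (-1)^(m-j) C(m,j)³ (h(m-j) - h j) = 0` in `ZMod p` (`sum_alt_cube_harm`). To see this, take
`F = ((X+1)⋯(X+m))³`. As `deg F < 2p - 1`, the power sums over `ZMod p` show that `F'` sums to zero
over the whole field (`sum_eval_derivative`); `F'` vanishes at `-1, …, -m`, and its values at
`0, …, m` are, up to a constant, three times the summands above. Division by `3` is where `p ≠ 3`
is needed.
-/

/-- The Apéry numbers `A(n) = ∑_{k=0}^{n} C(n,k)² C(n+k,k)`. -/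
def apA (n : ℕ) : ℤ :=
  ∑ k ∈ Finset.range (n + 1), (n.choose k : ℤ) ^ 2 * ((n + k).choose k : ℤ)

open Finset Polynomial

/-! ### Harmonic numbers modulo `p` and `p²` -/

/-- The harmonic number `1 + 1/2 + ⋯ + 1/j` in `ZMod q`. The inverses are junk values unless
`1, …, j` are prime to `q`; it is only used for `q = p` or `q = p²` and `j < p`. -/
def harm (q j : ℕ) : ZMod q := ∑ i ∈ range j, ((i + 1 : ℕ) : ZMod q)⁻¹

lemma harm_succ (q j : ℕ) : harm q (j + 1) = harm q j + ((j + 1 : ℕ) : ZMod q)⁻¹ :=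
  sum_range_succ _ _

lemma natCast_mul_inv {p : ℕ} (hp : p.Prime) {e i : ℕ} (h0 : 0 < i) (h1 : i < p) :
    (i : ZMod (p ^ e)) * (i : ZMod (p ^ e))⁻¹ = 1 :=
  ZMod.coe_mul_inv_eq_one _
    (Nat.Coprime.pow_right _ (Nat.coprime_of_lt_prime (by omega) h1 hp).symm)

lemma isUnit_factorial {p : ℕ} (hp : p.Prime) {e j : ℕ} (h1 : j < p) :
    IsUnit ((j.factorial : ℕ) : ZMod (p ^ e)) := by
  rw [ZMod.isUnit_iff_coprime]
  exact Nat.Coprime.pow_right _ ((hp.coprime_iff_not_dvd.2 (by rw [hp.dvd_factorial]; omega)).symm)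

lemma sq_zero (p : ℕ) : (p : ZMod (p ^ 2)) ^ 2 = 0 := by
  exact_mod_cast ZMod.natCast_self (p ^ 2)

/-- Reduction modulo `p`. -/
def red (p : ℕ) : ZMod (p ^ 2) →+* ZMod p := ZMod.castHom (dvd_pow_self p two_ne_zero) (ZMod p)

/-- Multiplication by `p` kills the kernel of reduction modulo `p`. -/
lemma mul_eq_zero_of_red {p : ℕ} {x : ZMod (p ^ 2)} (h : red p x = 0) :
    (p : ZMod (p ^ 2)) * x = 0 := by
  obtain ⟨z, rfl⟩ := ZMod.intCast_surjective x
  rw [map_intCast, ZMod.intCast_zmod_eq_zero_iff_dvd] at h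
  obtain ⟨y, rfl⟩ := h
  push_cast
  rw [← mul_assoc, ← pow_two, sq_zero, zero_mul]

lemma red_harm {p : ℕ} (hp : p.Prime) {j : ℕ} (h1 : j < p) : red p (harm (p ^ 2) j) = harm p j := by
  have : Fact p.Prime := ⟨hp⟩
  unfold harm
  rw [map_sum]
  refine sum_congr rfl fun i hi => ?_
  have hi := mem_range.1 hi
  apply eq_inv_of_mul_eq_one_right
  have := congrArg (red p) (natCast_mul_inv hp (e := 2) (Nat.succ_pos i) (by omega))
  simpa using this

/-- The terms of `harm p (p - 1)` with index above `j` are `1/(p - l) = -1/l` for `1 ≤ l ≤ i`. -/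
lemma harm_reflect_aux {p : ℕ} (hp : p.Prime) (i j : ℕ) (h : i + j + 1 = p) :
    harm p j = harm p (p - 1) + harm p i := by
  induction i generalizing j with
  | zero => obtain rfl : j = p - 1 := by omega
            simp [harm]
  | succ i ih =>
    have h2 := ih (j + 1) (by omega)
    rw [harm_succ] at h2
    rw [harm_succ]
    have hneg : ((j + 1 : ℕ) : ZMod p) = - ((i + 1 : ℕ) : ZMod p) := by
      rw [eq_neg_iff_add_eq_zero, ← Nat.cast_add, show j + 1 + (i + 1) = p by omega]; simp
    have : Fact p.Prime := ⟨hp⟩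
    rw [hneg, inv_neg] at h2
    linear_combination h2

lemma two_ne {p : ℕ} (h2 : 2 < p) : (2 : ZMod p) ≠ 0 := by
  intro h
  have : ((2 : ℕ) : ZMod p) = 0 := by exact_mod_cast h
  rw [ZMod.natCast_eq_zero_iff] at this
  exact absurd (Nat.le_of_dvd (by norm_num) this) (by omega)

lemma harm_p_sub_one {p : ℕ} (hp : p.Prime) (h2 : 2 < p) : harm p (p - 1) = 0 := by
  have : Fact p.Prime := ⟨hp⟩
  have h := harm_reflect_aux hp (p - 1) 0 (by omega)
  have h0 : harm p 0 = 0 := by simp [harm]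
  have : (2 : ZMod p) * harm p (p - 1) = 0 := by linear_combination h0 - h
  exact (mul_eq_zero.1 this).resolve_left (two_ne h2)

lemma harm_reflect {p : ℕ} (hp : p.Prime) (h2 : 2 < p) (i j : ℕ) (h : i + j + 1 = p) :
    harm p j = harm p i := by
  rw [harm_reflect_aux hp i j h, harm_p_sub_one hp h2, zero_add]

/-! ### Lucas' congruence modulo `p²` -/

/-- The part of `(pn + j)!` left after removing one factor `p` from each of `p, 2p, …, np` and the
resulting `n!`, computed modulo `p²`. Each full block `(pi + 1)⋯(pi + p - 1)` contributes `(p - 1)!`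
since `harm p (p - 1) = 0`. -/
lemma factorial_block {p : ℕ} (hp : p.Prime) (h2 : 2 < p) (n j : ℕ) (hj : j < p) :
    ∃ U : ℕ, (p * n + j).factorial = p ^ n * n.factorial * U ∧
      (U : ZMod (p ^ 2)) = ((p - 1).factorial : ZMod (p ^ 2)) ^ n * (j.factorial : ZMod (p ^ 2)) *
        (1 + (p : ZMod (p ^ 2)) * (n : ZMod (p ^ 2)) * harm (p ^ 2) j) := by
  induction n generalizing j with
  | zero => exact ⟨j.factorial, by simp, by simp⟩
  | succ n ihn =>
    induction j with
    | zero =>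
      obtain ⟨U, h, hU⟩ := ihn (p - 1) (by omega)
      refine ⟨U, ?_, ?_⟩
      · have e : p * (n + 1) + 0 = (p * n + (p - 1)) + 1 := by
          have := hp.pos
          rw [mul_add]; omega
        have e2 : p * n + (p - 1) + 1 = p * (n + 1) := by rw [← e, add_zero]
        rw [e, Nat.factorial_succ, h, e2, Nat.factorial_succ]; ring
      · have hz : (p : ZMod (p ^ 2)) * harm (p ^ 2) (p - 1) = 0 :=
          mul_eq_zero_of_red (by rw [red_harm hp (by omega), harm_p_sub_one hp h2])
        have h0 : harm (p ^ 2) 0 = 0 := by simp [harm]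
        rw [hU, h0, Nat.factorial_zero]
        push_cast
        linear_combination (((p - 1).factorial : ZMod (p ^ 2)) ^ n * ((p - 1).factorial : ZMod (p ^ 2)) * n) * hz
    | succ j ihj =>
      obtain ⟨U, h, hU⟩ := ihj (by omega)
      refine ⟨U * (p * (n + 1) + j + 1), ?_, ?_⟩
      · rw [← add_assoc, Nat.factorial_succ, h]; ring
      · have hi := natCast_mul_inv hp (e := 2) (Nat.succ_pos j) hj
        rw [Nat.cast_mul, hU, harm_succ, Nat.factorial_succ]
        have hs := sq_zero p
        push_cast at hi ⊢
        generalize ((j : ZMod (p ^ 2)) + 1)⁻¹ = v at hi ⊢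
        generalize harm (p ^ 2) j = x at hi ⊢
        generalize ((p - 1).factorial : ZMod (p ^ 2)) = w at hi ⊢
        generalize (j.factorial : ZMod (p ^ 2)) = y at hi ⊢
        linear_combination (w ^ (n + 1) * y * (n + 1) ^ 2 * x) * hs -
          (w ^ (n + 1) * y * p * (n + 1)) * hi

/-- Lucas' congruence modulo `p²`, when the lower digits `i` and `j` add without carry. -/
lemma choose_block {p : ℕ} (hp : p.Prime) (h2 : 2 < p) (a b i j : ℕ) (hij : i + j < p) :
    ((p * (a + b) + (i + j)).choose (p * a + i) : ZMod (p ^ 2)) =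
      ((a + b).choose a : ZMod (p ^ 2)) * ((i + j).choose i : ZMod (p ^ 2)) *
        (1 + (p : ZMod (p ^ 2)) * (((a : ZMod (p ^ 2)) + (b : ZMod (p ^ 2))) * harm (p ^ 2) (i + j)
          - (a : ZMod (p ^ 2)) * harm (p ^ 2) i - (b : ZMod (p ^ 2)) * harm (p ^ 2) j)) := by
  obtain ⟨U, hU, hU'⟩ := factorial_block hp h2 a i (by omega)
  obtain ⟨V, hV, hV'⟩ := factorial_block hp h2 b j (by omega)
  obtain ⟨W, hW, hW'⟩ := factorial_block hp h2 (a + b) (i + j) (by omega)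
  have key : (p * (a + b) + (i + j)).choose (p * a + i) * (U * V) = (a + b).choose a * W := by
    have e1 := Nat.add_choose_mul_factorial_mul_factorial (p * b + j) (p * a + i)
    have e2 := Nat.add_choose_mul_factorial_mul_factorial b a
    rw [show p * b + j + (p * a + i) = p * (a + b) + (i + j) by ring, hU, hV, hW, add_comm a b, ← e2] at e1
    have hpos : 0 < p ^ a * p ^ b * a.factorial * b.factorial := by
      have := hp.pos
      positivity
    apply Nat.eq_of_mul_eq_mul_left hpos
    rw [pow_add] at e1
    rw [add_comm a b]
    linear_combination e1
  have key2 := congrArg (Nat.cast : ℕ → ZMod (p ^ 2)) key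
  have e3 := congrArg (Nat.cast : ℕ → ZMod (p ^ 2)) (Nat.add_choose_mul_factorial_mul_factorial j i)
  have u1 := isUnit_factorial hp (e := 2) (j := i) (by omega)
  have u2 := isUnit_factorial hp (e := 2) (j := j) (by omega)
  have u3 := (isUnit_factorial hp (e := 2) (j := p - 1) (by omega)).pow (a + b)
  rw [add_comm j i] at e3
  push_cast at key2 e3 hW'
  rw [hU', hV', hW', ← e3] at key2
  have hs := sq_zero p
  generalize harm (p ^ 2) i = x at *
  generalize harm (p ^ 2) j = y at *
  generalize harm (p ^ 2) (i + j) = z at *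
  have inv : ∀ t : ZMod (p ^ 2), (1 + p * t) * (1 - p * t) = 1 := fun t => by
    linear_combination (-t ^ 2) * hs
  have ux : IsUnit (1 + p * (a * x) : ZMod (p ^ 2)) := IsUnit.of_mul_eq_one _ (inv _)
  have uy : IsUnit (1 + p * (b * y) : ZMod (p ^ 2)) := IsUnit.of_mul_eq_one _ (inv _)
  apply (((u1.mul u2).mul u3).mul (ux.mul uy)).mul_left_cancel
  rw [pow_add] at key2 ⊢
  generalize ((p - 1).factorial : ZMod (p ^ 2)) ^ a = w1 at *
  generalize ((p - 1).factorial : ZMod (p ^ 2)) ^ b = w2 at *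
  generalize (i.factorial : ZMod (p ^ 2)) = f at *
  generalize (j.factorial : ZMod (p ^ 2)) = g at *
  generalize ((i + j).choose i : ZMod (p ^ 2)) = c1 at *
  generalize ((a + b).choose a : ZMod (p ^ 2)) = c2 at *
  generalize (p : ZMod (p ^ 2)) = π at *
  generalize (a : ZMod (p ^ 2)) = a' at *
  generalize (b : ZMod (p ^ 2)) = b' at *
  have h3 : (1 + π * (a' * x)) * (1 + π * (b' * y)) * (1 + π * ((a' + b') * z - a' * x - b' * y)) =
      1 + π * (a' + b') * z := by
    have h3' : π ^ 3 = 0 := by linear_combination π * hs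
    linear_combination ((a' * x) * (b' * y) + ((a' * x) + (b' * y)) * ((a' + b') * z - a' * x - b' * y)) * hs
      + (a' * x) * (b' * y) * ((a' + b') * z - a' * x - b' * y) * h3'
  linear_combination key2 - f * g * w1 * w2 * c1 * c2 * h3

/-! ### Sums of derivatives over `ZMod p` -/

/-- Over `ZMod p` the power sum of exponent `i < 2(p - 1)` vanishes unless `i = p - 1`, and `X ^ (p - 1)`
does not occur in a derivative, its coefficient being a multiple of `p`. -/
lemma sum_eval_derivative {p : ℕ} [Fact p.Prime] (F : (ZMod p)[X])
    (hF : F.natDegree < 2 * p - 1) : ∑ a : ZMod p, F.derivative.eval a = 0 := by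
  have hp := (Fact.out : p.Prime)
  have e : ∀ a : ZMod p, F.derivative.eval a =
      ∑ n ∈ range (2 * p - 1), F.coeff n * n * a ^ (n - 1) := fun a => by
    rw [derivative_eval, sum_over_range' _ (by simp) _ hF]
  simp_rw [e]
  rw [sum_comm]
  refine sum_eq_zero fun n hn => ?_
  have hn := mem_range.1 hn
  rw [← mul_sum]
  rcases Nat.eq_zero_or_pos n with rfl | h0
  · simp
  rcases lt_trichotomy n p with h | rfl | h
  · rw [FiniteField.sum_pow_lt_card_sub_one _ _ (by rw [ZMod.card]; omega), mul_zero]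
  · simp
  · have e2 : ∀ a : ZMod p, a ^ (n - 1) = a ^ (n - p) := fun a => by
      have h1 : n - 1 = p + (n - 1 - p) := by omega
      have h2 : n - p = 1 + (n - 1 - p) := by omega
      rw [h1, h2, pow_add, pow_add, ZMod.pow_card, pow_one]
    simp_rw [e2]
    rw [FiniteField.sum_pow_lt_card_sub_one _ _ (by rw [ZMod.card]; omega), mul_zero]

/-- The polynomial `(X + 1)(X + 2)⋯(X + s)` over `ZMod p`. -/
noncomputable def rise (p s : ℕ) : (ZMod p)[X] := ∏ i ∈ range s, (X + C ((i + 1 : ℕ) : ZMod p))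

lemma natDegree_rise {p : ℕ} [Fact p.Prime] (s : ℕ) : (rise p s).natDegree = s := by
  unfold rise
  rw [natDegree_prod_of_monic _ _ fun i _ => monic_X_add_C _]
  simp only [natDegree_X_add_C, sum_const, card_range, smul_eq_mul, mul_one]

lemma eval_rise {p : ℕ} (s k : ℕ) :
    (rise p s).eval (k : ZMod p) * (k.factorial : ZMod p) = ((s + k).factorial : ZMod p) := by
  induction s with
  | zero => simp [rise]
  | succ s ih =>
    rw [rise, prod_range_succ, ← rise, eval_mul, mul_right_comm, ih, Nat.add_right_comm,
      Nat.factorial_succ]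
    simp
    ring

lemma eval_derivative_rise {p : ℕ} [Fact p.Prime] (s k : ℕ) (h : s + k < p) :
    (rise p s).derivative.eval (k : ZMod p) =
      (rise p s).eval (k : ZMod p) * (harm p (s + k) - harm p k) := by
  induction s with
  | zero => simp [rise]
  | succ s ih =>
    have hne : ((s + k + 1 : ℕ) : ZMod p) ≠ 0 := by
      rw [Ne, ZMod.natCast_eq_zero_iff]
      exact Nat.not_dvd_of_pos_of_lt (by omega) (by omega)
    have hinv := mul_inv_cancel₀ hne
    rw [rise, prod_range_succ, ← rise, derivative_mul, eval_add, eval_mul, eval_mul, eval_mul,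
      ih (by omega), Nat.add_right_comm, harm_succ]
    push_cast at hinv ⊢
    simp only [derivative_X, eval_add, eval_X, eval_one, eval_natCast, derivative_natCast,
      derivative_one, eval_zero, map_add, map_natCast, map_one]
    linear_combination (-(rise p s).eval (k : ZMod p)) * hinv

lemma sum_zmod {p : ℕ} [Fact p.Prime] (g : ZMod p → ZMod p) :
    ∑ a : ZMod p, g a = ∑ k ∈ range p, g (k : ZMod p) := by
  refine sum_nbij' (fun a => a.val) (fun k => (k : ZMod p)) ?_ ?_ ?_ ?_ ?_
  · intro a _; exact mem_range.2 (ZMod.val_lt a)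
  · intro k _; exact mem_univ _
  · intro a _; exact ZMod.natCast_zmod_val a
  · intro k hk; exact ZMod.val_cast_of_lt (mem_range.1 hk)
  · intro a _; simp

/-- `sum_eval_derivative` for the cube of `(X + 1)⋯(X + m)`, whose derivative vanishes at
`m + 1, …, 2m`. -/
lemma sum_rise_cube {p m : ℕ} [Fact p.Prime] (hm : p = 2 * m + 1) (h5 : 5 ≤ p) :
    ∑ k ∈ range (m + 1), (rise p m).eval (k : ZMod p) ^ 3 * (harm p (m + k) - harm p k) = 0 := by
  have hp := (Fact.out : p.Prime)
  have h := sum_eval_derivative (rise p m ^ 3)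
    ((natDegree_pow_le).trans_lt (by rw [natDegree_rise]; omega))
  have hr : range p = range (m + 1 + m) := by rw [hm]; congr 1; ring
  rw [sum_zmod, hr, sum_range_add] at h
  -- `m + 1 + x = -(m - x)` in `ZMod p`, where the cube has a multiple root.
  have hz : ∑ x ∈ range m, (derivative (rise p m ^ 3)).eval ((m + 1 + x : ℕ) : ZMod p) = 0 := by
    refine sum_eq_zero fun x hx => ?_
    have hx := mem_range.1 hx
    have : (rise p m).eval ((m + 1 + x : ℕ) : ZMod p) = 0 := by
      rw [rise, eval_prod]
      refine prod_eq_zero (mem_range.2 (show m - 1 - x < m by omega)) ?_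
      rw [eval_add, eval_X, eval_C, ← Nat.cast_add, show m + 1 + x + (m - 1 - x + 1) = p by omega]
      simp
    rw [derivative_pow, eval_mul, eval_mul, eval_pow, this]
    simp
  rw [hz, add_zero] at h
  have h3 : (3 : ZMod p) ≠ 0 := by
    intro h
    have : ((3 : ℕ) : ZMod p) = 0 := by exact_mod_cast h
    rw [ZMod.natCast_eq_zero_iff] at this
    exact absurd (Nat.le_of_dvd (by norm_num) this) (by omega)
  apply (mul_eq_zero.1 (_ : (3 : ZMod p) * _ = 0)).resolve_left h3
  rw [← h, mul_sum]
  refine sum_congr rfl fun k hk => ?_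
  have hk := mem_range.1 hk
  rw [derivative_pow, eval_mul, eval_mul, eval_derivative_rise m k (by omega)]
  simp
  ring

/-! ### Complementary binomial coefficients -/

/-- `(p - 1)! = j! (p - i)⋯(p - 1)` with the last `i` factors expanded modulo `p²`. -/
lemma factorial_complement {p : ℕ} (hp : p.Prime) (i j : ℕ) (h : i + j + 1 = p) :
    (j.factorial : ZMod (p ^ 2)) * (-1) ^ i * (i.factorial : ZMod (p ^ 2)) *
      (1 - (p : ZMod (p ^ 2)) * harm (p ^ 2) i) = ((p - 1).factorial : ZMod (p ^ 2)) := by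
  induction i generalizing j with
  | zero => obtain rfl : j = p - 1 := by omega
            simp [harm]
  | succ i ih =>
    rw [← ih (j + 1) (by omega), Nat.factorial_succ j, Nat.factorial_succ i, harm_succ]
    have hj : ((j + 1 : ℕ) : ZMod (p ^ 2)) = p - ((i + 1 : ℕ) : ZMod (p ^ 2)) := by
      rw [eq_sub_iff_add_eq, ← Nat.cast_add, show j + 1 + (i + 1) = p by omega]
    have hi := natCast_mul_inv hp (e := 2) (Nat.succ_pos i) (by omega)
    have hs := sq_zero p
    rw [Nat.cast_mul, Nat.cast_mul, hj]
    push_cast at hi ⊢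
    generalize ((i : ZMod (p ^ 2)) + 1)⁻¹ = v at hi ⊢
    generalize harm (p ^ 2) i = x at hi ⊢
    generalize (i.factorial : ZMod (p ^ 2)) = f at hi ⊢
    generalize (j.factorial : ZMod (p ^ 2)) = g at hi ⊢
    rw [pow_succ (-1 : ZMod (p ^ 2)) i]
    generalize ((-1 : ZMod (p ^ 2)) ^ i) = s at hi ⊢
    linear_combination (f * g * s * x) * hs + f * g * s * p * hi

/-- A refinement of `C(m+j, j) ≡ (-1)^j C(m, j) (mod p)`, up to the constant
`(-1)^m (p - 1)! / (m!)²`. -/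
lemma choose_complement {p m : ℕ} (hp : p.Prime) (hm : p = 2 * m + 1) (j : ℕ) (hj : j ≤ m) :
    ((m + j).choose j : ZMod (p ^ 2)) * (m.factorial : ZMod (p ^ 2)) ^ 2 =
      ((p - 1).factorial : ZMod (p ^ 2)) * ((-1) ^ (m - j) * (m.choose j : ZMod (p ^ 2)) *
        (1 + (p : ZMod (p ^ 2)) * harm (p ^ 2) (m - j))) := by
  have h := factorial_complement hp (m - j) (m + j) (by omega)
  have e1 := congrArg (Nat.cast : ℕ → ZMod (p ^ 2)) (Nat.add_choose_mul_factorial_mul_factorial j m)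
  have e2 := congrArg (Nat.cast : ℕ → ZMod (p ^ 2)) (Nat.choose_mul_factorial_mul_factorial hj)
  rw [add_comm j m, Nat.choose_symm_add] at e1
  push_cast at e1 e2
  have hsg : ((-1 : ZMod (p ^ 2)) ^ (m - j)) ^ 2 = 1 := by
    rw [← pow_mul, mul_comm, pow_mul]; simp
  have hs := sq_zero p
  rw [← h, ← e1]
  generalize harm (p ^ 2) (m - j) = x at *
  generalize ((-1 : ZMod (p ^ 2)) ^ (m - j)) = s at *
  generalize (j.factorial : ZMod (p ^ 2)) = f at *
  generalize (m.factorial : ZMod (p ^ 2)) = g at *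
  generalize ((m - j).factorial : ZMod (p ^ 2)) = g' at *
  generalize ((m + j).choose j : ZMod (p ^ 2)) = c1 at *
  generalize (m.choose j : ZMod (p ^ 2)) = c2 at *
  linear_combination (- c1 * g) * e2 - (c1 * g * c2 * f * g') * hsg
    + (c1 * g * c2 * f * g' * s ^ 2 * x ^ 2) * hs

/-- `choose_complement` reduced modulo `p`. -/
lemma choose_complement_red {p m : ℕ} (hp : p.Prime) (hm : p = 2 * m + 1) (j : ℕ) (hj : j ≤ m) :
    ((m + j).choose j : ZMod p) * (m.factorial : ZMod p) ^ 2 =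
      ((p - 1).factorial : ZMod p) * ((-1) ^ (m - j) * (m.choose j : ZMod p)) := by
  simpa using congrArg (red p) (choose_complement hp hm j hj)

/-! ### Alternating sums of cubes of binomial coefficients -/

lemma factorial_ne_zero {p : ℕ} (hp : p.Prime) {j : ℕ} (h1 : j < p) :
    (j.factorial : ZMod p) ≠ 0 := by
  rw [Ne, ZMod.natCast_eq_zero_iff, hp.dvd_factorial]; omega

/-- `sum_rise_cube` rewritten: the value of `(X + 1)⋯(X + m)` at `k` is a constant times
`(-1)^(m-k) C(m,k)`, and `harm p (m + k) = harm p (m - k)`. -/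
lemma sum_alt_cube_harm {p m : ℕ} (hp : p.Prime) (hm : p = 2 * m + 1) (h5 : 5 ≤ p) :
    ∑ k ∈ range (m + 1), (-1) ^ (m - k) * (m.choose k : ZMod p) ^ 3 *
      (harm p (m - k) - harm p k) = 0 := by
  have : Fact p.Prime := ⟨hp⟩
  have h := sum_rise_cube hm h5
  apply (mul_eq_zero.1 (_ : ((p - 1).factorial : ZMod p) ^ 3 * _ = 0)).resolve_left
    (pow_ne_zero _ (factorial_ne_zero hp (by omega)))
  have h' := congrArg (fun x => (m.factorial : ZMod p) ^ 3 * x) h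
  simp only [mul_zero] at h'
  rw [← h', mul_sum, mul_sum]
  refine sum_congr rfl fun k hk => ?_
  have hk := mem_range.1 hk
  rw [harm_reflect hp (by omega) (m - k) (m + k) (by omega)]
  have e1 := eval_rise (p := p) m k
  have e2 := congrArg (Nat.cast : ℕ → ZMod p) (Nat.add_choose_mul_factorial_mul_factorial k m)
  rw [add_comm k m, Nat.choose_symm_add] at e2
  push_cast at e2
  have e3 : (rise p m).eval (k : ZMod p) = ((m + k).choose k : ZMod p) * (m.factorial : ZMod p) := by
    apply mul_right_cancel₀ (factorial_ne_zero hp (show k < p by omega))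
    linear_combination e1 - e2
  have e4 := choose_complement_red hp hm k (by omega)
  have e5 : ((-1 : ZMod p) ^ (m - k)) ^ 2 = 1 := by
    rw [← pow_mul, mul_comm, pow_mul]; simp
  have e6 : (rise p m).eval (k : ZMod p) * (m.factorial : ZMod p) =
      ((p - 1).factorial : ZMod p) * ((-1) ^ (m - k) * (m.choose k : ZMod p)) := by
    rw [e3, ← e4]; ring
  have e7 := congrArg (fun x => x ^ 3) e6
  linear_combination (-(harm p (m - k) - harm p k)) * e7 -
    ((p - 1).factorial : ZMod p) ^ 3 * (-1) ^ (m - k) * (m.choose k : ZMod p) ^ 3 *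
      (harm p (m - k) - harm p k) * e5

lemma sign_reflect {R : Type*} [Ring R] {m k : ℕ} (hodd : Odd m) (hk : k ≤ m) :
    (-1 : R) ^ k = -(-1) ^ (m - k) := by
  have h : (-1 : R) ^ (m - k) * (-1) ^ k = -1 := by
    rw [← pow_add, Nat.sub_add_cancel hk, hodd.neg_one_pow]
  rcases neg_one_pow_eq_or R (m - k) with h1 | h1 <;> rw [h1] at h ⊢
  · simpa using h
  · simpa using h

lemma sum_alt_cube {m : ℕ} (hodd : Odd m) :
    ∑ k ∈ range (m + 1), (-1 : ℤ) ^ (m - k) * (m.choose k : ℤ) ^ 3 = 0 := by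
  have h := sum_flip (n := m) fun k => (-1 : ℤ) ^ (m - k) * (m.choose k : ℤ) ^ 3
  have h2 : ∑ r ∈ range (m + 1), (-1 : ℤ) ^ (m - (m - r)) * (m.choose (m - r) : ℤ) ^ 3 =
      - ∑ k ∈ range (m + 1), (-1 : ℤ) ^ (m - k) * (m.choose k : ℤ) ^ 3 := by
    rw [← sum_neg_distrib]
    refine sum_congr rfl fun k hk => ?_
    have hk : k ≤ m := by have := mem_range.1 hk; omega
    rw [Nat.sub_sub_self hk, Nat.choose_symm hk, sign_reflect hodd hk, neg_mul]
  linarith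

/-- For `m` odd, reflecting `k ↦ m - k` shows that the sum in `sum_alt_cube_harm` is twice this one. -/
lemma sum_alt_cube_harm' {p m : ℕ} (hp : p.Prime) (hm : p = 2 * m + 1) (h5 : 5 ≤ p)
    (hodd : Odd m) :
    ∑ k ∈ range (m + 1), (-1) ^ (m - k) * (m.choose k : ZMod p) ^ 3 * harm p (m - k) = 0 := by
  have : Fact p.Prime := ⟨hp⟩
  have h := sum_alt_cube_harm hp hm h5
  have h1 := sum_flip (n := m) fun k => (-1) ^ (m - k) * (m.choose k : ZMod p) ^ 3 * harm p k
  have h2 : ∑ r ∈ range (m + 1), (-1) ^ (m - (m - r)) * (m.choose (m - r) : ZMod p) ^ 3 *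
      harm p (m - r) = - ∑ k ∈ range (m + 1), (-1) ^ (m - k) * (m.choose k : ZMod p) ^ 3 *
        harm p (m - k) := by
    rw [← sum_neg_distrib]
    refine sum_congr rfl fun k hk => ?_
    have hk : k ≤ m := by have := mem_range.1 hk; omega
    rw [Nat.sub_sub_self hk, Nat.choose_symm hk, sign_reflect hodd hk]
    ring
  simp only [mul_sub, sum_sub_distrib] at h
  apply (mul_eq_zero.1 (_ : (2 : ZMod p) * _ = 0)).resolve_left (two_ne (by omega))
  linear_combination h + h2 - h1

/-! ### Apéry numbers modulo `p²` -/

/-- The case `r = 1`. -/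
lemma apA_half {p m : ℕ} (hp : p.Prime) (hm : p = 2 * m + 1) (h5 : 5 ≤ p) (hodd : Odd m) :
    ((apA m : ℤ) : ZMod (p ^ 2)) = 0 := by
  apply ((isUnit_factorial hp (e := 2) (j := m) (by omega)).pow 2).mul_left_cancel
  have h1 := congrArg (Int.cast : ℤ → ZMod (p ^ 2)) (sum_alt_cube hodd)
  have h2 : (p : ZMod (p ^ 2)) * ∑ k ∈ range (m + 1), (-1) ^ (m - k) *
      (m.choose k : ZMod (p ^ 2)) ^ 3 * harm (p ^ 2) (m - k) = 0 := by
    apply mul_eq_zero_of_red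
    rw [← sum_alt_cube_harm' hp hm h5 hodd, map_sum]
    refine sum_congr rfl fun k hk => ?_
    simp [red_harm hp (show m - k < p by omega)]
  push_cast at h1
  rw [mul_zero, apA]
  push_cast
  have : ((p - 1).factorial : ZMod (p ^ 2)) * (0 + 0) = 0 := by simp
  rw [← this]
  nth_rewrite 1 [← h1]
  rw [← h2, mul_sum, mul_sum, ← sum_add_distrib, mul_sum]
  refine sum_congr rfl fun k hk => ?_
  have hk : k ≤ m := by have := mem_range.1 hk; omega
  linear_combination (m.choose k : ZMod (p ^ 2)) ^ 2 * choose_complement hp hm k hk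

/-- The first-order coefficient in `k` of the terms of `A(pn + m)` sums to zero modulo `p`: by
`choose_complement_red` and `harm_reflect` it is three times the sum in `sum_alt_cube_harm`. -/
lemma sum_derivative_term {p m : ℕ} (hp : p.Prime) (hm : p = 2 * m + 1) (h5 : 5 ≤ p) :
    (p : ZMod (p ^ 2)) * ∑ j ∈ range (m + 1), (m.choose j : ZMod (p ^ 2)) ^ 2 *
      ((m + j).choose j : ZMod (p ^ 2)) * (2 * harm (p ^ 2) (m - j) + harm (p ^ 2) (m + j)
        - 3 * harm (p ^ 2) j) = 0 := by
  have : Fact p.Prime := ⟨hp⟩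
  apply mul_eq_zero_of_red
  apply (mul_eq_zero.1 (_ : (m.factorial : ZMod p) ^ 2 * _ = 0)).resolve_left
    (pow_ne_zero _ (factorial_ne_zero hp (by omega)))
  have h := congrArg (fun x => 3 * ((p - 1).factorial : ZMod p) * x) (sum_alt_cube_harm hp hm h5)
  simp only [mul_zero] at h
  rw [← h, map_sum, mul_sum, mul_sum]
  refine sum_congr rfl fun k hk => ?_
  have hk : k ≤ m := by have := mem_range.1 hk; omega
  simp only [map_mul, map_sub, map_add, map_pow, map_natCast, map_ofNat,
    red_harm hp (show m - k < p by omega), red_harm hp (show m + k < p by omega),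
    red_harm hp (show k < p by omega), harm_reflect hp (by omega) (m - k) (m + k) (by omega)]
  linear_combination 3 * (m.choose k : ZMod p) ^ 2 * (harm p (m - k) - harm p k) *
    choose_complement_red hp hm k hk

lemma sum_range_mul_block {M : Type*} [AddCommMonoid M] (f : ℕ → M) (p n : ℕ) :
    ∑ K ∈ range (p * n), f K = ∑ k ∈ range n, ∑ j ∈ range p, f (p * k + j) := by
  induction n with
  | zero => simp
  | succ n ih => rw [mul_add, mul_one, sum_range_add, ih, sum_range_succ]

lemma choose_block_large {p : ℕ} (hp : p.Prime) (n k m j : ℕ) (hm : m < j) (hj : j < p) :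
    (((p * n + m).choose (p * k + j) : ℕ) : ZMod (p ^ 2)) ^ 2 = 0 := by
  have : Fact p.Prime := ⟨hp⟩
  have h := Choose.choose_modEq_choose_mod_mul_choose_div_nat (p := p) (n := p * n + m)
    (k := p * k + j)
  rw [Nat.mul_add_mod, Nat.mul_add_mod, Nat.mod_eq_of_lt hj, Nat.mod_eq_of_lt (hm.trans hj),
    Nat.choose_eq_zero_of_lt hm, zero_mul, Nat.modEq_zero_iff_dvd] at h
  rw [← Nat.cast_pow, ZMod.natCast_eq_zero_iff]
  exact pow_dvd_pow_of_dvd h 2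

/-- If `p²` divides `A(n)`, then it divides `A(pn + m)`. -/
lemma apA_step {p m : ℕ} (hp : p.Prime) (hm : p = 2 * m + 1) (h5 : 5 ≤ p) (n : ℕ)
    (hn : ((apA n : ℤ) : ZMod (p ^ 2)) = 0) :
    ((apA (p * n + m) : ℤ) : ZMod (p ^ 2)) = 0 := by
  have hs := sq_zero p
  have hB := sum_derivative_term hp hm h5
  set B := ∑ j ∈ range (m + 1), (m.choose j : ZMod (p ^ 2)) ^ 2 *
      ((m + j).choose j : ZMod (p ^ 2)) * (2 * harm (p ^ 2) (m - j) + harm (p ^ 2) (m + j)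
        - 3 * harm (p ^ 2) j) with hBdef
  -- The range is extended by zero terms to a whole number of blocks of length `p`.
  have hext : ((apA (p * n + m) : ℤ) : ZMod (p ^ 2)) = ∑ K ∈ range (p * (n + 1)),
      ((p * n + m).choose K : ZMod (p ^ 2)) ^ 2 * ((p * n + m + K).choose K : ZMod (p ^ 2)) := by
    rw [apA]
    push_cast
    refine sum_subset (range_subset_range.2 (by rw [mul_add]; omega)) fun K _ hK => ?_
    rw [Nat.choose_eq_zero_of_lt (by rw [mem_range] at hK; omega)]
    simp
  rw [hext, sum_range_mul_block]
  have hblock : ∀ k ∈ range (n + 1), ∑ j ∈ range p,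
      ((p * n + m).choose (p * k + j) : ZMod (p ^ 2)) ^ 2 *
        ((p * n + m + (p * k + j)).choose (p * k + j) : ZMod (p ^ 2)) =
      ((n.choose k : ZMod (p ^ 2)) ^ 2 * ((n + k).choose k : ZMod (p ^ 2))) *
        (∑ j ∈ range (m + 1), (m.choose j : ZMod (p ^ 2)) ^ 2 *
          ((m + j).choose j : ZMod (p ^ 2)) * (1 + (p : ZMod (p ^ 2)) * (n : ZMod (p ^ 2)) *
            (harm (p ^ 2) m - 2 * harm (p ^ 2) (m - j) + harm (p ^ 2) (m + j)))) := by
    intro k hk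
    have hk : k ≤ n := by have := mem_range.1 hk; omega
    have hsub : range (m + 1) ⊆ range p := range_subset_range.2 (by omega)
    rw [← sum_subset hsub fun j hj hj' => by
      rw [choose_block_large hp n k m j (by rw [mem_range] at hj'; omega) (mem_range.1 hj),
        zero_mul]]
    -- Adding a multiple of `p * B = 0` makes the two sides agree term by term in `j`.
    have hB' : ∀ x : ZMod (p ^ 2), x = x +
        ((n.choose k : ZMod (p ^ 2)) ^ 2 * ((n + k).choose k : ZMod (p ^ 2))) *
          (k : ZMod (p ^ 2)) * ((p : ZMod (p ^ 2)) * B) := fun x => by rw [hB]; ring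
    rw [hB' (_ * ∑ j ∈ range (m + 1), _), hBdef, mul_sum, mul_sum, mul_sum, ← sum_add_distrib]
    refine sum_congr rfl fun j hj => ?_
    have hj : j ≤ m := by have := mem_range.1 hj; omega
    have c1 := choose_block hp (by omega) k (n - k) j (m - j) (by omega)
    have c2 := choose_block hp (by omega) k n j m (by omega)
    rw [Nat.add_sub_cancel' hk, Nat.add_sub_cancel' hj, Nat.cast_sub hk] at c1
    rw [add_comm k n, add_comm j m] at c2
    rw [show p * n + m + (p * k + j) = p * (n + k) + (m + j) by ring, c1, c2]
    generalize harm (p ^ 2) m = x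
    generalize harm (p ^ 2) j = y
    generalize harm (p ^ 2) (m - j) = z
    generalize harm (p ^ 2) (m + j) = w
    have expand : ∀ π a b : ZMod (p ^ 2), π ^ 2 = 0 →
        (1 + π * a) ^ 2 * (1 + π * b) = 1 + π * (2 * a + b) := fun π a b h => by
      linear_combination (a ^ 2 + 2 * a * b + π * a ^ 2 * b) * h
    rw [mul_pow]
    linear_combination ((n.choose k : ZMod (p ^ 2)) * (m.choose j : ZMod (p ^ 2))) ^ 2 *
      (((n + k).choose k : ZMod (p ^ 2)) * ((m + j).choose j : ZMod (p ^ 2))) *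
      expand (p : ZMod (p ^ 2)) (((k : ZMod (p ^ 2)) + (n - k)) * x - k * y - (n - k) * z)
        ((k + n) * w - k * y - n * x) hs
  rw [sum_congr rfl hblock, ← sum_mul]
  rw [apA] at hn
  push_cast at hn
  rw [hn, zero_mul]

/-- Theorem 1.9 (case `p ≡ 3 (mod 4)`): `A((p^r−1)/2) ≡ 0 (mod p²)`. -/
theorem apA_congruence_inert (p : ℕ) (hp : p.Prime) (hp5 : 5 ≤ p) (hp4 : p % 4 = 3)
    (r : ℕ) (hr : 1 ≤ r) :
    apA ((p ^ r - 1) / 2) ≡ 0 [ZMOD (p : ℤ) ^ 2] := by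
  obtain ⟨m, hm⟩ : ∃ m, p = 2 * m + 1 := ⟨p / 2, by omega⟩
  have hodd : Odd m := by rw [Nat.odd_iff]; omega
  suffices h : ((apA ((p ^ r - 1) / 2) : ℤ) : ZMod (p ^ 2)) = 0 by
    rw [ZMod.intCast_zmod_eq_zero_iff_dvd] at h
    rw [Int.modEq_zero_iff_dvd]
    exact_mod_cast h
  induction r, hr using Nat.le_induction with
  | base =>
    rw [pow_one, show (p - 1) / 2 = m by omega]
    exact apA_half hp hm hp5 hodd
  | succ r _ ih =>
    have e : (p ^ (r + 1) - 1) / 2 = p * ((p ^ r - 1) / 2) + m := by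
      have ho : Odd (p ^ r) := Odd.pow ⟨m, hm⟩
      obtain ⟨t, ht⟩ := ho
      have h1 : p ^ (r + 1) = 2 * (p * t + m) + 1 := by
        rw [pow_succ, ht]
        linear_combination hm
      rw [h1, ht]; simp
    rw [e]
    exact apA_step hp hm hp5 _ ih
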